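/- Potential sum bound (Lemma 2 of the paper): Let V be a finite set, λ₁ ≥ 0 a real, and 𝒮 a laminar family of nonempty subsets of V containing every singleton {v} for v ∈ V. Suppose y assigns a nonnegative real to each nonempty subset U ⊆ V, with y_U = 0 whenever U ∉ 𝒮, and suppose that for every S ∈ 𝒮 the sum of y_U over nonempty U ⊆ S is at most λ₁|S|. Then for every S ⊆ V, the sum of y_U over nonempty U ⊆ S is at most λ₁|S|. -/

import Mathlib

/-! Strong induction on `S`. For nonempty `S`, choose an inclusion-maximal member `M` of `𝒮` inside
`S`; one exists because `𝒮` contains the singletons. By laminarity and maximality, every member of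
`𝒮` inside `S` lies in `M` or in `S \ M`, so the sum over subsets of `S` is at most the sum over
subsets of `M`, bounded by hypothesis, plus the sum over subsets of `S \ M`, bounded by induction.
The cardinalities of `M` and `S \ M` add up to that of `S`. -/

open scoped Classical

/-- Potential sum bound (Lemma 2 of the paper): if the dual values `y` are supported on a
laminar family `𝒮` containing the singletons, and the packing constraint
`∑_{U ⊆ S} y_U ≤ λ₁|S|` holds for every member of `𝒮`, then it holds for every `S ⊆ V`. -/
theorem potential_sum_bound
    {V : Type*} [Fintype V] [DecidableEq V]
    (lam₁ : ℝ) (hlam₁ : 0 ≤ lam₁)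
    (𝒮 : Finset (Finset V))
    (hne : ∀ A ∈ 𝒮, A.Nonempty)
    (hlaminar : ∀ A ∈ 𝒮, ∀ B ∈ 𝒮, A ⊆ B ∨ B ⊆ A ∨ A ∩ B = ∅)
    (hsing : ∀ v : V, ({v} : Finset V) ∈ 𝒮)
    (y : Finset V → ℝ)
    (hy : ∀ U : Finset V, U.Nonempty → 0 ≤ y U)
    (hsupp : ∀ U : Finset V, U.Nonempty → U ∉ 𝒮 → y U = 0)
    (hbound : ∀ S ∈ 𝒮,
      (∑ U ∈ Finset.univ.filter (fun U : Finset V => U.Nonempty ∧ U ⊆ S), y U) ≤ lam₁ * S.card) :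
    ∀ S : Finset V,
      (∑ U ∈ Finset.univ.filter (fun U : Finset V => U.Nonempty ∧ U ⊆ S), y U) ≤ lam₁ * S.card := by
  intro S
  induction S using Finset.strongInduction with
  | H S ih =>
  rcases S.eq_empty_or_nonempty with rfl | ⟨v, hv⟩
  · rw [Finset.sum_eq_zero]
    · simp
    · intro U hU
      obtain ⟨hU, hU'⟩ := (Finset.mem_filter.mp hU).2
      exact absurd (Finset.subset_empty.mp hU') hU.ne_empty
  · obtain ⟨M, hM, hmax⟩ := (𝒮.filter (fun A => A ⊆ S)).exists_maximal
      ⟨{v}, Finset.mem_filter.mpr ⟨hsing v, Finset.singleton_subset_iff.mpr hv⟩⟩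
    obtain ⟨hM𝒮, hMS⟩ := Finset.mem_filter.mp hM
    have hrest := ih (S \ M) (Finset.sdiff_ssubset hMS (hne M hM𝒮))
    have hMbound := hbound M hM𝒮
    have hcard : ((S \ M).card : ℝ) + M.card = S.card := by
      exact_mod_cast Finset.card_sdiff_add_card_eq_card hMS
    have hsplit : (∑ U ∈ Finset.univ.filter (fun U : Finset V => U.Nonempty ∧ U ⊆ S), y U) ≤
        (∑ U ∈ Finset.univ.filter (fun U : Finset V => U.Nonempty ∧ U ⊆ M), y U) +
        (∑ U ∈ Finset.univ.filter (fun U : Finset V => U.Nonempty ∧ U ⊆ S \ M), y U) := by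
      simp only [Finset.sum_filter]
      rw [← Finset.sum_add_distrib]
      refine Finset.sum_le_sum fun U _ => ?_
      by_cases hU : U.Nonempty
      · have h0 := hy U hU
        by_cases hU𝒮 : U ∈ 𝒮
        · have hcover : U ⊆ S → U ⊆ M ∨ U ⊆ S \ M := by
            intro hUS
            rcases hlaminar U hU𝒮 M hM𝒮 with h | h | h
            · exact Or.inl h
            · exact Or.inl (hmax (Finset.mem_filter.mpr ⟨hU𝒮, hUS⟩) h)
            · exact Or.inr (Finset.subset_sdiff.mpr
                ⟨hUS, Finset.disjoint_iff_inter_eq_empty.mpr h⟩)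
          simp only [hU, true_and]
          split_ifs <;> first | linarith | tauto
        · simp [hsupp U hU hU𝒮]
      · simp [hU]
    rw [← hcard]
    linarith
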